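/- arXiv:2510.23903 — 3 statements merged into one kernel-verified Lean document; each statement's English description precedes it below -/
import Mathlib

section
/- For every composition σ = (r_1,...,r_k) of a positive integer n, the vector (h_0(σ), h_1(σ), ..., h_n(σ)) is unimodal: h_0(σ) ≤ h_1(σ) ≤ ... ≤ h_{⌊n/2⌋}(σ). -/
open Finset Polynomial

/-- `pSum σ i = r₁ + ⋯ + rᵢ`, the `i`-th partial sum of the composition `σ`. -/
def pSum (σ : List ℕ) (i : ℕ) : ℕ := (σ.take i).sum

/-- Membership in the set `P_σ ⊆ ℕⁿ`: the partial sum of the first `s_i`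
coordinates is at most `s_i` for every `i ∈ [k]`. -/
def memP (n : ℕ) (σ : List ℕ) (a : Fin n → ℕ) : Prop :=
  ∀ i, 1 ≤ i → i ≤ σ.length →
    (∑ j ∈ Finset.univ.filter (fun j : Fin n => (j : ℕ) < pSum σ i), a j) ≤ pSum σ i

/-- The number of nonzero coordinates of a tuple. -/
def nonzeroCount {n : ℕ} (a : Fin n → ℕ) : ℕ :=
  (Finset.univ.filter (fun j => a j ≠ 0)).card

/-- `h_i(σ)`: the number of points of `P_σ` with exactly `i` nonzero coordinates. -/
noncomputable def hVec (n : ℕ) (σ : List ℕ) (i : ℕ) : ℕ :=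
  {a : Fin n → ℕ | memP n σ a ∧ nonzeroCount a = i}.ncard

/-!
A point `a` of `ℕⁿ` with `i` nonzero coordinates is encoded by two `i`-element sets: the set `A` of
the indices of its nonzero coordinates, and the set `B` of the nonzero values of its partial sums,
shifted down by one. The sum of the first `j` coordinates is at most `p` exactly when `A` has at
most as many elements below `j` as `B` has below `p`. So membership in `P_σ` compares, at each
partial sum `s` of `σ`, the numbers of elements of `A` and of `B` below `s`, and this comparison
only depends on `D = A \ B` and `U = B \ A`. With `D` and `U` fixed, the remaining freedom is the
choice of `A ∩ B`, an `(i - |D|)`-element subset of a set of size at least `n - 2|D|`, and the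
number of these choices increases with `i` as long as `i ≤ n / 2`.
-/

theorem choose_le_choose_of_le_half {m k l : ℕ} (hkl : k ≤ l) (hl : l ≤ m / 2) :
    m.choose k ≤ m.choose l := by
  induction l, hkl using Nat.le_induction with
  | base => exact le_rfl
  | succ l _ ih => exact (ih (by lia)).trans (Nat.choose_le_succ_of_lt_half_left hl)

section RelatedPairs

variable {α : Type*} {X Y A B D U : Finset α} {i j : ℕ}

/-- The pairs of `i`-element subsets `A ⊆ X` and `B ⊆ Y` that are related by `Q`. -/
def relatedPairs (X Y : Finset α) (Q : Finset α → Finset α → Prop) [DecidableRel Q] (i : ℕ) :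
    Finset (Finset α × Finset α) :=
  {P ∈ X.powersetCard i ×ˢ Y.powersetCard i | Q P.1 P.2}

variable {Q : Finset α → Finset α → Prop} [DecidableRel Q]

theorem mk_mem_relatedPairs :
    (A, B) ∈ relatedPairs X Y Q i ↔ ((A ⊆ X ∧ #A = i) ∧ B ⊆ Y ∧ #B = i) ∧ Q A B := by
  simp only [relatedPairs, mem_filter, mem_product, mem_powersetCard]

variable [DecidableEq α]

theorem card_relatedPairs_filter_sdiff_eq (hXY : X ⊆ Y) (hQ : ∀ A B, Q A B ↔ Q (A \ B) (B \ A))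
    (hD : D ⊆ X) (hU : U ⊆ Y) (hDU : Disjoint D U) (hcard : #D = #U) (hQDU : Q D U)
    (hi : #D ≤ i) :
    #{P ∈ relatedPairs X Y Q i | (P.1 \ P.2, P.2 \ P.1) = (D, U)} =
      (#(X \ (D ∪ U))).choose (i - #D) := by
  rw [← card_powersetCard]
  refine card_nbij' (fun P ↦ P.1 ∩ P.2) (fun C ↦ (D ∪ C, U ∪ C)) ?_ ?_ ?_ ?_
  · rintro ⟨A, B⟩ h
    simp only [coe_filter, mk_mem_relatedPairs, Set.mem_ofPred_eq, Prod.mk.injEq] at h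
    obtain ⟨⟨⟨⟨hA, hAi⟩, -⟩, -⟩, rfl, rfl⟩ := h
    refine mem_coe.2 (mem_powersetCard.2 ⟨by grind, ?_⟩)
    have := card_sdiff_add_card_inter A B
    lia
  · intro C hC
    obtain ⟨hCX, hCi⟩ := mem_powersetCard.1 (mem_coe.1 hC)
    obtain ⟨hCX, hC⟩ := subset_sdiff.1 hCX
    obtain ⟨hCD, hCU⟩ := disjoint_union_right.1 hC
    have hsdiffD : (D ∪ C) \ (U ∪ C) = D := by grind [disjoint_left]
    have hsdiffU : (U ∪ C) \ (D ∪ C) = U := by grind [disjoint_left]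
    simp only [coe_filter, mk_mem_relatedPairs, Set.mem_ofPred_eq]
    rw [hQ, hsdiffD, hsdiffU, card_union_of_disjoint hCD.symm, card_union_of_disjoint hCU.symm]
    exact ⟨⟨⟨⟨union_subset hD hCX, by lia⟩, union_subset hU (hCX.trans hXY), by lia⟩, hQDU⟩, rfl⟩
  · rintro ⟨A, B⟩ h
    simp only [coe_filter, Set.mem_ofPred_eq, Prod.mk.injEq] at h
    obtain ⟨-, rfl, rfl⟩ := h
    have hB : B \ A ∪ A ∩ B = B := by rw [inter_comm, sdiff_union_inter]
    exact Prod.ext (sdiff_union_inter A B) hB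
  · intro C _
    simp only [← inter_union_distrib_right, disjoint_iff_inter_eq_empty.1 hDU, empty_union]

theorem card_relatedPairs_le_card_relatedPairs (hXY : X ⊆ Y)
    (hQ : ∀ A B, Q A B ↔ Q (A \ B) (B \ A)) (hij : i ≤ j) (hj : j ≤ #X / 2) :
    #(relatedPairs X Y Q i) ≤ #(relatedPairs X Y Q j) := by
  have hmaps (k : ℕ) : ∀ P ∈ relatedPairs X Y Q k,
      (P.1 \ P.2, P.2 \ P.1) ∈ X.powerset ×ˢ Y.powerset := by
    rintro ⟨A, B⟩ hP
    obtain ⟨⟨⟨hA, -⟩, hB, -⟩, -⟩ := mk_mem_relatedPairs.1 hP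
    exact mem_product.2
      ⟨mem_powerset.2 (sdiff_subset.trans hA), mem_powerset.2 (sdiff_subset.trans hB)⟩
  rw [card_eq_sum_card_fiberwise (hmaps i), card_eq_sum_card_fiberwise (hmaps j)]
  refine sum_le_sum fun DU _ ↦ ?_
  obtain hempty | ⟨⟨A, B⟩, hfiber⟩ := eq_empty_or_nonempty
    {P ∈ relatedPairs X Y Q i | (P.1 \ P.2, P.2 \ P.1) = DU}
  · simp only [hempty, card_empty, Nat.zero_le]
  · obtain ⟨hAB, rfl⟩ := mem_filter.1 hfiber
    obtain ⟨⟨⟨hA, hAi⟩, hB, hBi⟩, hQAB⟩ := mk_mem_relatedPairs.1 hAB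
    have hD : A \ B ⊆ X := sdiff_subset.trans hA
    have hU : B \ A ⊆ Y := sdiff_subset.trans hB
    have hcard : #(A \ B) = #(B \ A) := card_sdiff_comm (hAi.trans hBi.symm)
    have hDi : #(A \ B) ≤ i := hAi ▸ card_le_card sdiff_subset
    have hfree : #X - 2 * #(A \ B) ≤ #(X \ (A \ B ∪ B \ A)) :=
      calc #X - 2 * #(A \ B) = #X - (#(A \ B) + #(B \ A)) := by lia
        _ ≤ #X - #(A \ B ∪ B \ A) := Nat.sub_le_sub_left (card_union_le _ _) _
        _ ≤ #(X \ (A \ B ∪ B \ A)) := le_card_sdiff _ _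
    rw [card_relatedPairs_filter_sdiff_eq hXY hQ hD hU disjoint_sdiff_sdiff hcard
        ((hQ A B).1 hQAB) hDi,
      card_relatedPairs_filter_sdiff_eq hXY hQ hD hU disjoint_sdiff_sdiff hcard
        ((hQ A B).1 hQAB) (hDi.trans hij)]
    exact choose_le_choose_of_le_half (by lia) (by lia)

end RelatedPairs

section CountDominated

variable {A B : Finset ℕ}

theorem card_filter_lt_eq_count (A : Finset ℕ) (p : ℕ) : #{x ∈ A | x < p} = p.count (· ∈ A) := by
  rw [Nat.count_eq_card_filter_range]
  congr 1
  ext x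
  simp only [mem_filter, mem_range, and_comm]

theorem count_mem_le_card (A : Finset ℕ) (p : ℕ) : p.count (· ∈ A) ≤ #A :=
  card_filter_lt_eq_count A p ▸ card_filter_le _ _

theorem count_sdiff_add_count_inter (A B : Finset ℕ) (p : ℕ) :
    p.count (· ∈ A \ B) + p.count (· ∈ A ∩ B) = p.count (· ∈ A) := by
  induction p with
  | zero => simp only [Nat.count_zero]
  | succ p ih =>
    simp only [Nat.count_succ]
    grind

/-- At every `s ∈ S`, the set `A` has at most as many elements below `s` as the set `B`. -/
def CountDominated (S : Set ℕ) (A B : Finset ℕ) : Prop :=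
  ∀ s ∈ S, s.count (· ∈ A) ≤ s.count (· ∈ B)

theorem countDominated_iff_sdiff (S : Set ℕ) (A B : Finset ℕ) :
    CountDominated S A B ↔ CountDominated S (A \ B) (B \ A) := by
  refine forall₂_congr fun s _ ↦ ?_
  rw [← count_sdiff_add_count_inter A B, ← count_sdiff_add_count_inter B A, inter_comm B A,
    Nat.add_le_add_iff_right]

theorem exists_monotone_jumps_eq (h : #A = #B) :
    ∃ F : ℕ → ℕ, Monotone F ∧ F 0 = 0 ∧ (∀ l, F l < F (l + 1) ↔ l ∈ A) ∧
      ∀ l ∈ A, F (l + 1) - 1 ∈ B := by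
  -- At each element of `A`, the step function `F` moves on to the next element of `V`.
  set V : Finset ℕ := insert 0 (B.image (· + 1)) with hV
  have hVcard : #V = #A + 1 := by
    rw [hV, card_insert_of_notMem (by simp), card_image_of_injective _ (add_left_injective 1), h]
  have hlt (j : ℕ) (hfin : {x | x ∈ V}.Finite) : j.count (· ∈ A) < #hfin.toFinset := by
    simpa [hVcard, Nat.lt_succ_iff] using count_mem_le_card A j
  have hmono : Monotone fun j : ℕ ↦ Nat.nth (· ∈ V) (j.count (· ∈ A)) := fun j k hjk ↦
    Nat.nth_le_nth' (Nat.count_monotone _ hjk) (hlt k)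
  have hjump (l : ℕ) :
      Nat.nth (· ∈ V) (l.count (· ∈ A)) < Nat.nth (· ∈ V) ((l + 1).count (· ∈ A)) ↔ l ∈ A := by
    refine ⟨fun hl ↦ ?_, fun hl ↦ Nat.nth_lt_nth' (Nat.count_lt_count_succ_iff.2 hl) (hlt _)⟩
    by_contra hlA
    rw [Nat.count_succ_eq_count_iff.2 hlA] at hl
    exact hl.false
  refine ⟨_, hmono, ?_, hjump, fun l hl ↦ ?_⟩
  · simp [hV]
  · have hmem := Nat.nth_mem _ (hlt (l + 1))
    have hpos := (Nat.zero_le _).trans_lt ((hjump l).2 hl)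
    obtain ⟨b, hb, hbF⟩ := mem_image.1 (mem_of_mem_insert_of_ne hmem hpos.ne')
    rwa [← hbF, Nat.add_sub_cancel]

end CountDominated

section PrefixSum

variable {n : ℕ} {a b : Fin n → ℕ} {A B : Finset ℕ} {j l m p : ℕ}

/-- The sum of the first `p` coordinates of `a`, where `p` may exceed `n`. -/
def prefixSum (a : Fin n → ℕ) (p : ℕ) : ℕ := ∑ j ∈ univ.filter fun j : Fin n ↦ (j : ℕ) < p, a j

/-- The set of the indices of the nonzero coordinates of `a`, as natural numbers. -/
def indexSupport (a : Fin n → ℕ) : Finset ℕ :=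
  ({j | a j ≠ 0} : Finset (Fin n)).map Fin.valEmbedding

/-- The set of the nonzero values of the prefix sums of `a`, each diminished by one: this puts it
in `range m` when the sum of `a` is at most `m`. Every such value is attained just after a nonzero
coordinate. -/
def prefixLevels (a : Fin n → ℕ) : Finset ℕ :=
  (indexSupport a).image fun l ↦ prefixSum a (l + 1) - 1

theorem prefixSum_zero (a : Fin n → ℕ) : prefixSum a 0 = 0 := by
  simp [prefixSum]

theorem prefixSum_mono (a : Fin n → ℕ) : Monotone (prefixSum a) := fun _ _ hpq ↦
  sum_le_sum_of_subset (monotone_filter_right _ fun _ _ hj ↦ hj.trans_le hpq)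

theorem prefixSum_succ (a : Fin n → ℕ) (j : Fin n) :
    prefixSum a (j + 1) = prefixSum a j + a j := by
  have : (univ.filter fun k : Fin n ↦ (k : ℕ) < j + 1) =
      insert j (univ.filter fun k : Fin n ↦ (k : ℕ) < j) := by
    grind
  rw [prefixSum, this, sum_insert (by simp), add_comm, prefixSum]

theorem prefixSum_succ_of_le (a : Fin n → ℕ) (h : n ≤ l) :
    prefixSum a (l + 1) = prefixSum a l := by
  unfold prefixSum
  congr 1
  grind

theorem prefixSum_injective : Function.Injective (prefixSum : (Fin n → ℕ) → ℕ → ℕ) := by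
  intro a b hab
  funext j
  have ha := prefixSum_succ a j
  rwa [hab, prefixSum_succ b j, Nat.add_left_cancel_iff, eq_comm] at ha

theorem prefixSum_sub {F : ℕ → ℕ} (hF : Monotone F) (hF0 : F 0 = 0) (h : p ≤ n) :
    prefixSum (fun j : Fin n ↦ F (j + 1) - F j) p = F p := by
  induction p with
  | zero => rw [prefixSum_zero, hF0]
  | succ p ih =>
    rw [prefixSum_succ _ ⟨p, h⟩, ih (by lia), Nat.add_sub_of_le (hF p.le_succ)]

theorem mem_indexSupport : l ∈ indexSupport a ↔ ∃ h : l < n, a ⟨l, h⟩ ≠ 0 := by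
  simp [indexSupport, Fin.exists_iff]

theorem indexSupport_subset_range (a : Fin n → ℕ) : indexSupport a ⊆ range n := fun _ hl ↦
  mem_range.2 (mem_indexSupport.1 hl).1

theorem card_indexSupport (a : Fin n → ℕ) : #(indexSupport a) = nonzeroCount a :=
  card_map _

theorem prefixSum_lt_prefixSum_succ_iff :
    prefixSum a l < prefixSum a (l + 1) ↔ l ∈ indexSupport a := by
  rw [mem_indexSupport]
  by_cases hl : l < n
  · have := prefixSum_succ a ⟨l, hl⟩
    grind
  · simp [prefixSum_succ_of_le a (not_lt.1 hl), hl]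

theorem prefixSum_succ_sub_one_lt_iff (hl : l ∈ indexSupport a) :
    prefixSum a (l + 1) - 1 < prefixSum a j ↔ l < j := by
  have hjump := prefixSum_lt_prefixSum_succ_iff.2 hl
  refine ⟨fun h ↦ ?_, fun h ↦ ?_⟩
  · by_contra! hjl
    have := prefixSum_mono a hjl
    lia
  · have := prefixSum_mono a (Nat.succ_le_of_lt h)
    lia

theorem prefixSum_succ_sub_one_injOn (a : Fin n → ℕ) :
    Set.InjOn (fun l ↦ prefixSum a (l + 1) - 1) (indexSupport a) := by
  intro l hl k hk (hlk : prefixSum a (l + 1) - 1 = prefixSum a (k + 1) - 1)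
  refine eq_of_forall_gt_iff fun j ↦ ?_
  rw [← prefixSum_succ_sub_one_lt_iff hl, ← prefixSum_succ_sub_one_lt_iff hk, hlk]

theorem card_prefixLevels (a : Fin n → ℕ) : #(prefixLevels a) = #(indexSupport a) :=
  card_image_of_injOn (prefixSum_succ_sub_one_injOn a)

theorem prefixLevels_subset_range (h : prefixSum a n ≤ m) : prefixLevels a ⊆ range m := by
  refine image_subset_iff.2 fun l hl ↦ mem_range.2 ?_
  exact ((prefixSum_succ_sub_one_lt_iff hl).2 (mem_indexSupport.1 hl).1).trans_le h

theorem count_prefixLevels_prefixSum (a : Fin n → ℕ) (j : ℕ) :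
    (prefixSum a j).count (· ∈ prefixLevels a) = j.count (· ∈ indexSupport a) := by
  rw [← card_filter_lt_eq_count, ← card_filter_lt_eq_count, prefixLevels, filter_image,
    card_image_of_injOn ((prefixSum_succ_sub_one_injOn a).mono (filter_subset _ _)),
    filter_congr fun l hl ↦ prefixSum_succ_sub_one_lt_iff hl]

theorem prefixSum_sub_one_mem_prefixLevels (h : 0 < prefixSum a j) :
    prefixSum a j - 1 ∈ prefixLevels a := by
  induction j with
  | zero => exact absurd (prefixSum_zero a) h.ne'
  | succ j ih =>
    by_cases hj : j ∈ indexSupport a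
    · exact mem_image_of_mem _ hj
    · have heq : prefixSum a (j + 1) = prefixSum a j :=
        (not_lt.1 (prefixSum_lt_prefixSum_succ_iff.not.2 hj)).antisymm
          (prefixSum_mono a j.le_succ)
      rw [heq] at h ⊢
      exact ih h

theorem prefixSum_le_iff_count_le :
    prefixSum a j ≤ p ↔ j.count (· ∈ indexSupport a) ≤ p.count (· ∈ prefixLevels a) := by
  rw [← count_prefixLevels_prefixSum]
  refine ⟨fun h ↦ Nat.count_monotone _ h, fun h ↦ ?_⟩
  by_contra! hp
  have hlevel := prefixSum_sub_one_mem_prefixLevels ((Nat.zero_le p).trans_lt hp)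
  refine h.not_gt ?_
  calc p.count (· ∈ prefixLevels a)
      ≤ (prefixSum a j - 1).count (· ∈ prefixLevels a) :=
        Nat.count_monotone _ (Nat.le_sub_one_of_lt hp)
    _ < (prefixSum a j).count (· ∈ prefixLevels a) := Nat.count_strict_mono hlevel (by lia)

theorem eq_of_indexSupport_eq_of_prefixLevels_eq (hA : indexSupport a = indexSupport b)
    (hB : prefixLevels a = prefixLevels b) : a = b := by
  refine prefixSum_injective (funext fun j ↦ eq_of_forall_ge_iff fun p ↦ ?_)
  rw [prefixSum_le_iff_count_le, prefixSum_le_iff_count_le, hA, hB]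

theorem exists_indexSupport_eq_prefixLevels_eq (hA : A ⊆ range n) (h : #A = #B) :
    ∃ a : Fin n → ℕ, indexSupport a = A ∧ prefixLevels a = B := by
  obtain ⟨F, hF, hF0, hjump, hB⟩ := exists_monotone_jumps_eq h
  set a : Fin n → ℕ := fun j ↦ F (j + 1) - F j
  have hprefix {p : ℕ} (hp : p ≤ n) : prefixSum a p = F p := prefixSum_sub hF hF0 hp
  have hsupp : indexSupport a = A := by
    ext l
    by_cases hl : l < n
    · rw [← prefixSum_lt_prefixSum_succ_iff, hprefix hl, hprefix hl.le, hjump]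
    · exact iff_of_false (fun h ↦ hl (mem_range.1 (indexSupport_subset_range a h)))
        fun h ↦ hl (mem_range.1 (hA h))
  refine ⟨a, hsupp, eq_of_subset_of_card_le ?_ ?_⟩
  · refine image_subset_iff.2 fun l hl ↦ ?_
    rw [hprefix (mem_range.1 (indexSupport_subset_range a hl))]
    exact hB l (hsupp ▸ hl)
  · rw [card_prefixLevels, hsupp, h]

theorem forall_prefixSum_le_iff_countDominated (S : Set ℕ) (a : Fin n → ℕ) :
    (∀ s ∈ S, prefixSum a s ≤ s) ↔ CountDominated S (indexSupport a) (prefixLevels a) :=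
  forall₂_congr fun _ _ ↦ prefixSum_le_iff_count_le

theorem ncard_forall_prefixSum_le {S : Set ℕ} [DecidableRel (CountDominated S)] (hm : m ∈ S)
    (hnm : n ≤ m) (i : ℕ) :
    {a : Fin n → ℕ | (∀ s ∈ S, prefixSum a s ≤ s) ∧ nonzeroCount a = i}.ncard =
      #(relatedPairs (range n) (range m) (CountDominated S) i) := by
  rw [← Set.ncard_coe_finset]
  refine Set.BijOn.ncard_eq (f := fun a ↦ (indexSupport a, prefixLevels a)) ⟨?_, ?_, ?_⟩
  · rintro a ⟨ha, rfl⟩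
    refine mem_coe.2 (mk_mem_relatedPairs.2 ⟨⟨⟨indexSupport_subset_range a, card_indexSupport a⟩,
      prefixLevels_subset_range ((prefixSum_mono a hnm).trans (ha m hm)),
      (card_prefixLevels a).trans (card_indexSupport a)⟩,
      (forall_prefixSum_le_iff_countDominated S a).1 ha⟩)
  · intro a _ b _ hab
    exact eq_of_indexSupport_eq_of_prefixLevels_eq (Prod.ext_iff.1 hab).1 (Prod.ext_iff.1 hab).2
  · rintro ⟨A, B⟩ hAB
    obtain ⟨⟨⟨hA, hAi⟩, -, hBi⟩, hdom⟩ := mk_mem_relatedPairs.1 (mem_coe.1 hAB)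
    obtain ⟨a, rfl, rfl⟩ := exists_indexSupport_eq_prefixLevels_eq hA (hAi.trans hBi.symm)
    exact ⟨a, ⟨(forall_prefixSum_le_iff_countDominated S a).2 hdom,
      (card_indexSupport a).symm.trans hAi⟩, rfl⟩

end PrefixSum

/-- The index `i = 0`, absent from the definition of `memP`, only adds the constraint `0 ≤ 0`. -/
theorem memP_iff_forall_prefixSum_le {n : ℕ} {σ : List ℕ} {a : Fin n → ℕ} :
    memP n σ a ↔ ∀ s ∈ pSum σ '' Set.Iic σ.length, prefixSum a s ≤ s := by
  rw [Set.forall_mem_image]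
  refine ⟨fun h i hi ↦ ?_, fun h i _ hi ↦ h hi⟩
  rcases i.eq_zero_or_pos with rfl | hpos
  · simp [pSum, prefixSum_zero]
  · exact h i hpos hi

theorem hVec_unimodal_general (n : ℕ) (σ : List ℕ) (hsum : n ≤ σ.sum) :
    ∀ i j, i ≤ j → j ≤ n / 2 → hVec n σ i ≤ hVec n σ j := by
  classical
  intro i j hij hj
  have hmem : σ.sum ∈ pSum σ '' Set.Iic σ.length :=
    ⟨σ.length, Set.mem_Iic.2 le_rfl, by rw [pSum, List.take_length]⟩
  simp only [hVec, memP_iff_forall_prefixSum_le, ncard_forall_prefixSum_le hmem hsum]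
  exact card_relatedPairs_le_card_relatedPairs (range_subset_range.2 hsum)
    (countDominated_iff_sdiff _) hij (by rwa [card_range])

/-- The vector `(h_0(σ), …, h_n(σ))` is unimodal:
`h_0(σ) ≤ h_1(σ) ≤ ⋯ ≤ h_{⌊n/2⌋}(σ)`. -/
theorem hVec_unimodal (n : ℕ) (hn : 0 < n) (σ : List ℕ)
    (hpos : ∀ r ∈ σ, 0 < r) (hsum : σ.sum = n) :
    ∀ i j, i ≤ j → j ≤ n / 2 → hVec n σ i ≤ hVec n σ j :=
  hVec_unimodal_general n σ hsum.ge
end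

section
/- Let σ = (r_1,...,r_k) be a composition of a positive integer n. For 0 ≤ i ≤ ⌊n/2⌋, define γ_i(σ) to be the number of elements x ∈ H_σ such that S(x) ∩ T(x) = ∅ and #S(x) = i. Then Σ_{i=0}^{n} h_i(σ) t^i = Σ_{i=0}^{⌊n/2⌋} γ_i(σ) t^i (1+t)^{n-2i} as polynomials in t. -/
open Finset Polynomial

/-- Membership in `H_σ`: the nonzero entries appear in strictly increasing order
from left to right, and `p₁, …, p_{s_i} ≤ s_i` for every `i ∈ [k]`. -/
def memH (n : ℕ) (σ : List ℕ) (p : Fin n → ℕ) : Prop :=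
  (∀ j j' : Fin n, j < j' → p j ≠ 0 → p j' ≠ 0 → p j < p j') ∧
  (∀ i, 1 ≤ i → i ≤ σ.length → ∀ j : Fin n, (j : ℕ) < pSum σ i → p j ≤ pSum σ i)

/-- `S(x)`: the set of (1-indexed) positions of the nonzero entries of `x`. -/
def Spos {n : ℕ} (p : Fin n → ℕ) : Finset ℕ :=
  (Finset.univ.filter (fun j : Fin n => p j ≠ 0)).image (fun j : Fin n => (j : ℕ) + 1)

/-- `T(x)`: the set of nonzero entries of `x`. -/
def Tset {n : ℕ} (p : Fin n → ℕ) : Finset ℕ :=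
  (Finset.univ.filter (fun j : Fin n => p j ≠ 0)).image p

/-! A point `a` of `P_σ` and a tuple `p` of `H_σ` correspond when the nonzero entries of `p` are the
partial sums of `a` at its nonzero positions. An element of `H_σ` is determined by its pair `(S, T)`
of positions and values, and it satisfies the bound at a partial sum `m` of `σ` exactly when `S` has
at most as many elements `≤ m` as `T` does. That condition, like `#S = #T`, is unaffected by
removing `S ∩ T` from both sets. So the pairs with a given core `(S \ T, T \ S)` whose two sides
have `i` elements arise by adding to both sides an arbitrary subset of the remaining `n - 2 * i`
elements of `{1, …, n}`; this accounts for the factor `(1 + t) ^ (n - 2 * i)`. -/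

section IncrementsAndPartialSums

variable {ι : Type*} [LinearOrder ι] [LocallyFiniteOrderBot ι]

/-- The excess of each term of a family over the maximum of the earlier terms, truncated at zero. On
families whose nonzero terms strictly increase it is inverse to `cumulate`. -/
def increments (p : ι → ℕ) (j : ι) : ℕ := p j - (Iio j).sup p

/-- The partial sums of a family at the indices of its nonzero terms, and zero elsewhere. It carries
`P_σ` to `H_σ`. -/
def cumulate (a : ι → ℕ) (j : ι) : ℕ := if a j = 0 then 0 else ∑ k ∈ Iic j, a k

@[elab_as_elim]
theorem lowerSet_induction {P : Finset ι → Prop} (empty : P ∅)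
    (insert_Iio : ∀ j, P (Iio j) → P (insert j (Iio j))) {s : Finset ι}
    (hs : IsLowerSet (s : Set ι)) : P s := by
  induction s using Finset.induction_on_max with
  | empty => exact empty
  | insert j s hlt ih =>
    obtain rfl : s = Iio j := by
      ext k
      refine ⟨fun hk => mem_Iio.2 (hlt k hk), fun hk => ?_⟩
      have hkj := mem_Iio.1 hk
      exact (mem_insert.1 (hs hkj.le (mem_insert_self j s))).resolve_left hkj.ne
    exact insert_Iio j (ih (by simpa only [coe_Iio] using isLowerSet_Iio j))

theorem sum_increments (p : ι → ℕ) {s : Finset ι} (hs : IsLowerSet (s : Set ι)) :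
    ∑ j ∈ s, increments p j = s.sup p := by
  refine lowerSet_induction rfl (fun j ih => ?_) hs
  rw [sum_insert (by simp), sup_insert, ih]
  exact tsub_add_eq_max

theorem sum_Iic_eq_add_sum_Iio (a : ι → ℕ) (j : ι) :
    ∑ k ∈ Iic j, a k = a j + ∑ k ∈ Iio j, a k := by
  rw [← Iio_insert, sum_insert (by simp)]

theorem sup_cumulate (a : ι → ℕ) {s : Finset ι} (hs : IsLowerSet (s : Set ι)) :
    s.sup (cumulate a) = ∑ j ∈ s, a j := by
  refine lowerSet_induction rfl (fun j ih => ?_) hs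
  rw [sum_insert (by simp), sup_insert, ih, cumulate, sum_Iic_eq_add_sum_Iio]
  split_ifs with h <;> simp [h]

theorem increments_cumulate (a : ι → ℕ) : increments (cumulate a) = a := by
  ext j
  rw [increments, sup_cumulate a (by simpa only [coe_Iio] using isLowerSet_Iio j), cumulate,
    sum_Iic_eq_add_sum_Iio]
  split_ifs with h <;> simp [h]

theorem cumulate_injective : Function.Injective (cumulate : (ι → ℕ) → ι → ℕ) :=
  Function.LeftInverse.injective increments_cumulate

theorem cumulate_eq_zero_iff (a : ι → ℕ) (j : ι) : cumulate a j = 0 ↔ a j = 0 := by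
  rw [cumulate, sum_Iic_eq_add_sum_Iio]
  split_ifs with h <;> simp [h]

theorem strictMonoOn_cumulate (a : ι → ℕ) :
    StrictMonoOn (cumulate a) (Function.support (cumulate a)) := by
  intro j hj k hk hjk
  rw [Function.mem_support, Ne, cumulate_eq_zero_iff] at hj hk
  have hsum : ∑ i ∈ Iic j, a i ≤ ∑ i ∈ Iio k, a i :=
    sum_le_sum_of_subset fun i hi => mem_Iio.2 ((mem_Iic.1 hi).trans_lt hjk)
  rw [cumulate, cumulate, if_neg hj, if_neg hk, sum_Iic_eq_add_sum_Iio a k]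
  omega

theorem sup_Iio_lt {p : ι → ℕ} (hp : StrictMonoOn p (Function.support p)) {j : ι} (hj : p j ≠ 0) :
    (Iio j).sup p < p j := by
  refine (Finset.sup_lt_iff (Nat.pos_of_ne_zero hj)).2 fun k hk => ?_
  by_cases hk0 : p k = 0
  · rw [hk0]
    exact Nat.pos_of_ne_zero hj
  · exact hp hk0 hj (mem_Iio.1 hk)

theorem cumulate_increments {p : ι → ℕ} (hp : StrictMonoOn p (Function.support p)) :
    cumulate (increments p) = p := by
  ext j
  rw [cumulate, sum_increments p (by simpa only [coe_Iic] using isLowerSet_Iic j), ← Iio_insert,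
    sup_insert, increments]
  by_cases hj : p j = 0
  · simp [hj]
  · have hlt := sup_Iio_lt hp hj
    rw [if_neg (Nat.sub_ne_zero_of_lt hlt)]
    exact max_eq_left hlt.le

end IncrementsAndPartialSums

section StrictMonoOn

variable {ι κ : Type*} [LinearOrder ι] [LinearOrder κ]

theorem eqOn_of_strictMonoOn_of_image_eq {f g : ι → κ} {S : Finset ι} (hf : StrictMonoOn f S)
    (hg : StrictMonoOn g S) (h : f '' S = g '' S) : Set.EqOn f g S := by
  rw [← Set.domRestrict_eq_domRestrict_iff, ← StrictMono.range_inj hf.domRestrict hg.domRestrict,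
    Set.range_domRestrict, Set.range_domRestrict, h]

theorem exists_strictMonoOn_image_eq [Zero κ] {S : Finset ι} {T : Finset κ} (h : #S = #T) :
    ∃ f : ι → κ, StrictMonoOn f S ∧ S.image f = T ∧ ∀ i ∉ S, f i = 0 := by
  let e : S ≃o T := (S.orderIsoOfFin h).symm.trans (T.orderIsoOfFin rfl)
  have heq {i : ι} (hi : i ∈ S) : (if hi : i ∈ S then (e ⟨i, hi⟩ : κ) else 0) = e ⟨i, hi⟩ :=
    dif_pos hi
  refine ⟨fun i => if hi : i ∈ S then e ⟨i, hi⟩ else 0, fun i hi j hj hij => ?_, ?_,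
    fun i hi => dif_neg hi⟩
  · simp only [heq (mem_coe.1 hi), heq (mem_coe.1 hj)]
    exact e.strictMono hij
  · ext t
    simp only [mem_image]
    constructor
    · rintro ⟨i, hi, rfl⟩
      rw [heq hi]
      exact (e ⟨i, hi⟩).2
    · intro ht
      refine ⟨e.symm ⟨t, ht⟩, (e.symm ⟨t, ht⟩).2, ?_⟩
      rw [heq (e.symm ⟨t, ht⟩).2]
      simp

end StrictMonoOn

section CoreExpansion

variable {α R : Type*} [CommSemiring R]

theorem sum_powerset_pow_card (x : R) (s : Finset α) :
    ∑ C ∈ s.powerset, x ^ #C = (1 + x) ^ #s := by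
  simpa [add_comm] using sum_pow_mul_eq_add_pow x 1 s

theorem sum_range_card_fiber_mul {s : Finset α} {f : α → ℕ} {N : ℕ}
    (hf : ∀ a ∈ s, f a < N) (g : ℕ → R) :
    ∑ i ∈ range N, (#{a ∈ s | f a = i} : R) * g i = ∑ a ∈ s, g (f a) := by
  rw [← sum_fiberwise_of_maps_to' (t := range N) (fun a ha => mem_range.2 (hf a ha)) g]
  simp only [sum_const, nsmul_eq_mul]

variable [DecidableEq α]

theorem union_sdiff_union_of_disjoint {A B C : Finset α} (hAB : Disjoint A B)
    (hAC : Disjoint A C) : (A ∪ C) \ (B ∪ C) = A := by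
  rw [union_sdiff_distrib, sdiff_eq_empty_iff_subset.2 subset_union_right, union_empty,
    sdiff_eq_self_of_disjoint (disjoint_union_right.2 ⟨hAB, hAC⟩)]

theorem union_inter_union_of_disjoint {A B : Finset α} (C : Finset α) (hAB : Disjoint A B) :
    (A ∪ C) ∩ (B ∪ C) = C := by
  rw [← inter_union_distrib_right, disjoint_iff_inter_eq_empty.1 hAB, empty_union]

theorem sdiff_union_inter_swap (S T : Finset α) : T \ S ∪ S ∩ T = T := by
  rw [inter_comm, sdiff_union_inter]

theorem disjoint_sdiff_inter_swap (S T : Finset α) : Disjoint (T \ S) (S ∩ T) := by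
  rw [inter_comm]
  exact disjoint_sdiff_inter T S

/-- The common part `C = S ∩ T` of a pair with core `(A, B)` ranges over the subsets of
`U \ (A ∪ B)`. -/
theorem sum_pow_card_of_core_eq (x : R) {U A B : Finset α} {G : Finset (Finset α × Finset α)}
    (hU : ∀ q ∈ G, q.1 ⊆ U)
    (hG : ∀ C ⊆ U, Disjoint A C → Disjoint B C → (A ∪ C, B ∪ C) ∈ G) (hdisj : Disjoint A B) :
    ∑ q ∈ G with (q.1 \ q.2, q.2 \ q.1) = (A, B), x ^ #q.1 =
      x ^ #A * (1 + x) ^ #(U \ (A ∪ B)) := by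
  have hfree {C : Finset α} (hC : C ∈ (U \ (A ∪ B)).powerset) :
      C ⊆ U ∧ Disjoint A C ∧ Disjoint B C := by
    rwa [mem_powerset, subset_sdiff, disjoint_comm, disjoint_union_left] at hC
  rw [← sum_powerset_pow_card, mul_sum]
  refine sum_nbij' (fun q => q.1 ∩ q.2) (fun C => (A ∪ C, B ∪ C)) ?_ ?_ ?_ ?_ ?_
  · rintro ⟨S, T⟩ hq
    obtain ⟨hST, hcore⟩ := mem_filter.1 hq
    obtain ⟨rfl, rfl⟩ := Prod.mk.inj hcore
    exact mem_powerset.2 (subset_sdiff.2 ⟨inter_subset_left.trans (hU _ hST),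
      (disjoint_union_left.2 ⟨disjoint_sdiff_inter S T, disjoint_sdiff_inter_swap S T⟩).symm⟩)
  · intro C hC
    obtain ⟨hCU, hAC, hBC⟩ := hfree hC
    refine mem_filter.2 ⟨hG C hCU hAC hBC, ?_⟩
    rw [union_sdiff_union_of_disjoint hdisj hAC, union_sdiff_union_of_disjoint hdisj.symm hBC]
  · rintro ⟨S, T⟩ hq
    obtain ⟨rfl, rfl⟩ := Prod.mk.inj (mem_filter.1 hq).2
    exact Prod.ext (sdiff_union_inter S T) (sdiff_union_inter_swap S T)
  · exact fun C _ => union_inter_union_of_disjoint C hdisj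
  · rintro ⟨S, T⟩ hq
    obtain ⟨rfl, rfl⟩ := Prod.mk.inj (mem_filter.1 hq).2
    rw [← pow_add, card_sdiff_add_card_inter]

theorem sum_pow_card_eq_sum_disjoint (x : R) {U : Finset α} {G : Finset (Finset α × Finset α)}
    (hU : ∀ q ∈ G, q.1 ⊆ U ∧ q.2 ⊆ U) (hcard : ∀ q ∈ G, #q.1 = #q.2)
    (hG : ∀ A B C, C ⊆ U → Disjoint A C → Disjoint B C → ((A ∪ C, B ∪ C) ∈ G ↔ (A, B) ∈ G)) :
    ∑ q ∈ G, x ^ #q.1 =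
      ∑ q ∈ G with q.1 ∩ q.2 = ∅, x ^ #q.1 * (1 + x) ^ (#U - 2 * #q.1) := by
  have hcore : ∀ q ∈ G, (q.1 \ q.2, q.2 \ q.1) ∈ {q ∈ G | q.1 ∩ q.2 = ∅} := by
    rintro ⟨S, T⟩ hST
    refine mem_filter.2 ⟨(hG _ _ (S ∩ T) (inter_subset_left.trans (hU _ hST).1)
      (disjoint_sdiff_inter S T) (disjoint_sdiff_inter_swap S T)).1 ?_, ?_⟩
    · rwa [sdiff_union_inter, sdiff_union_inter_swap]
    · exact disjoint_iff_inter_eq_empty.1 disjoint_sdiff_sdiff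
  rw [← sum_fiberwise_of_maps_to hcore]
  refine sum_congr rfl fun ⟨A, B⟩ hAB => ?_
  obtain ⟨hABG, hAB⟩ := mem_filter.1 hAB
  have hdisj : Disjoint A B := disjoint_iff_inter_eq_empty.2 hAB
  have hcompl : #(U \ (A ∪ B)) = #U - 2 * #A := by
    rw [card_sdiff_of_subset (union_subset (hU _ hABG).1 (hU _ hABG).2),
      card_union_of_disjoint hdisj, ← hcard _ hABG, two_mul]
  rw [← hcompl]
  exact sum_pow_card_of_core_eq x (fun q hq => (hU q hq).1)
    (fun C hC hAC hBC => (hG A B C hC hAC hBC).2 hABG) hdisj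

end CoreExpansion

section PositionsAndValues

variable {n : ℕ}

theorem mem_Spos {p : Fin n → ℕ} {s : ℕ} : s ∈ Spos p ↔ ∃ j, p j ≠ 0 ∧ (j : ℕ) + 1 = s := by
  simp [Spos]

theorem mem_Tset {p : Fin n → ℕ} {t : ℕ} : t ∈ Tset p ↔ ∃ j, p j ≠ 0 ∧ p j = t := by
  simp [Tset]

theorem succ_mem_Spos {p : Fin n → ℕ} {j : Fin n} : (j : ℕ) + 1 ∈ Spos p ↔ p j ≠ 0 := by
  simp [mem_Spos, Fin.val_inj]

theorem Spos_subset_Icc (p : Fin n → ℕ) : Spos p ⊆ Icc 1 n := by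
  intro s hs
  obtain ⟨j, -, rfl⟩ := mem_Spos.1 hs
  exact mem_Icc.2 ⟨by omega, j.2⟩

theorem succ_val_injective : Function.Injective fun j : Fin n => (j : ℕ) + 1 :=
  fun _ _ h => Fin.ext (Nat.succ_injective h)

theorem card_Spos (p : Fin n → ℕ) : #(Spos p) = nonzeroCount p :=
  card_image_of_injective _ succ_val_injective

theorem card_Tset {p : Fin n → ℕ} (hp : StrictMonoOn p (Function.support p)) :
    #(Tset p) = nonzeroCount p :=
  card_image_of_injOn (hp.injOn.mono fun j hj => by simpa using hj)

theorem card_filter_Spos_le (p : Fin n → ℕ) (m : ℕ) :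
    #{s ∈ Spos p | s ≤ m} = #{j | p j ≠ 0 ∧ (j : ℕ) < m} := by
  rw [Spos, filter_image, card_image_of_injective _ succ_val_injective, filter_filter]
  rfl

theorem card_filter_Tset_le {p : Fin n → ℕ} (hp : StrictMonoOn p (Function.support p)) (m : ℕ) :
    #{t ∈ Tset p | t ≤ m} = #{j | p j ≠ 0 ∧ p j ≤ m} := by
  rw [Tset, filter_image, filter_filter]
  refine card_image_of_injOn (hp.injOn.mono fun j hj => ?_)
  exact (mem_filter.1 hj).2.1

theorem card_filter_Spos_le_card_filter_Tset_iff {p : Fin n → ℕ}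
    (hp : StrictMonoOn p (Function.support p)) (m : ℕ) :
    #{s ∈ Spos p | s ≤ m} ≤ #{t ∈ Tset p | t ≤ m} ↔ ∀ j : Fin n, (j : ℕ) < m → p j ≤ m := by
  rw [card_filter_Spos_le, card_filter_Tset_le hp]
  refine ⟨fun hcard j hjm => ?_, fun h => card_le_card fun j hj => ?_⟩
  · by_contra! hmp
    have hj0 : p j ≠ 0 := by omega
    refine hcard.not_gt (card_lt_card ((ssubset_iff_of_subset fun k hk => ?_).2 ⟨j, ?_, ?_⟩))
    · obtain ⟨hk0, hkm⟩ := (mem_filter.1 hk).2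
      have hkj : k < j := (hp.lt_iff_lt hk0 hj0).1 (hkm.trans_lt hmp)
      exact mem_filter.2 ⟨mem_univ k, hk0, lt_trans hkj hjm⟩
    · simp [hj0, hjm]
    · simp [hmp]
  · obtain ⟨hj0, hjm⟩ := (mem_filter.1 hj).2
    exact mem_filter.2 ⟨mem_univ j, hj0, h j hjm⟩

theorem eq_of_Spos_eq_of_Tset_eq {p q : Fin n → ℕ} (hp : StrictMonoOn p (Function.support p))
    (hq : StrictMonoOn q (Function.support q)) (hS : Spos p = Spos q) (hT : Tset p = Tset q) :
    p = q := by
  have hzero (j : Fin n) : p j ≠ 0 ↔ q j ≠ 0 := by rw [← succ_mem_Spos, hS, succ_mem_Spos]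
  have hcoe (r : Fin n → ℕ) : ((univ.filter fun j => r j ≠ 0 : Finset (Fin n)) : Set (Fin n)) =
      Function.support r := by ext; simp
  have hfilter : (univ.filter fun j => q j ≠ 0) = univ.filter fun j => p j ≠ 0 :=
    filter_congr fun j _ => (hzero j).symm
  have heqOn : Set.EqOn p q (univ.filter fun j => p j ≠ 0 : Finset (Fin n)) := by
    refine eqOn_of_strictMonoOn_of_image_eq (by rwa [hcoe]) (by rwa [← hfilter, hcoe]) ?_
    rw [← coe_image, ← coe_image, ← Tset, hT, Tset, hfilter]
  ext j
  by_cases hj : p j = 0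
  · rw [hj, not_not.1 (mt (hzero j).2 (not_not.2 hj))]
  · exact heqOn (by simpa using hj)

theorem exists_Spos_eq_Tset_eq {S T : Finset ℕ} (hS : S ⊆ Icc 1 n) (hT : 0 ∉ T) (h : #S = #T) :
    ∃ p : Fin n → ℕ, StrictMonoOn p (Function.support p) ∧ Spos p = S ∧ Tset p = T := by
  have himage :
      ({j | (j : ℕ) + 1 ∈ S} : Finset (Fin n)).image (fun j : Fin n => (j : ℕ) + 1) = S := by
    ext s
    simp only [mem_image, mem_filter, mem_univ, true_and]
    refine ⟨fun ⟨_, hj, hjs⟩ => hjs ▸ hj, fun hs => ?_⟩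
    obtain ⟨hs1, hsn⟩ := mem_Icc.1 (hS hs)
    have hs' : s - 1 + 1 = s := Nat.sub_add_cancel hs1
    exact ⟨⟨s - 1, by omega⟩, by rwa [hs'], hs'⟩
  have hcard : #{j : Fin n | (j : ℕ) + 1 ∈ S} = #T := by
    rw [← h, ← card_image_of_injective _ succ_val_injective, himage]
  obtain ⟨p, hmono, hpT, hp0⟩ := exists_strictMonoOn_image_eq hcard
  have hsupp (j : Fin n) : p j ≠ 0 ↔ j ∈ ({j | (j : ℕ) + 1 ∈ S} : Finset (Fin n)) :=
    ⟨not_imp_comm.1 (hp0 j), fun hj h0 => hT (hpT ▸ h0 ▸ mem_image_of_mem p hj)⟩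
  refine ⟨p, hmono.mono fun j hj => (hsupp j).1 hj, ?_, ?_⟩
  · simp only [Spos, hsupp, filter_mem_eq_inter, univ_inter, himage]
  · simp only [Tset, hsupp, filter_mem_eq_inter, univ_inter, hpT]

end PositionsAndValues

section AdmissiblePairs

open Classical in
/-- The pairs `(S, T)` of subsets of `{1, …, n}` of equal size such that, for every `m ∈ M`, at most
as many elements of `S` as of `T` are `≤ m`. When `M` is the set of partial sums of `σ`, these are
the pairs `(S(x), T(x))` with `x ∈ H_σ`. -/
noncomputable def admissiblePairs (n : ℕ) (M : Set ℕ) : Finset (Finset ℕ × Finset ℕ) :=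
  {q ∈ (Icc 1 n).powerset ×ˢ (Icc 1 n).powerset |
    #q.1 = #q.2 ∧ ∀ m ∈ M, #{s ∈ q.1 | s ≤ m} ≤ #{t ∈ q.2 | t ≤ m}}

variable {n : ℕ} {M : Set ℕ}

theorem mem_admissiblePairs {S T : Finset ℕ} :
    (S, T) ∈ admissiblePairs n M ↔ (S ⊆ Icc 1 n ∧ T ⊆ Icc 1 n) ∧
      #S = #T ∧ ∀ m ∈ M, #{s ∈ S | s ≤ m} ≤ #{t ∈ T | t ≤ m} := by
  simp only [admissiblePairs, mem_filter, mem_product, mem_powerset]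

theorem union_mem_admissiblePairs_iff {A B C : Finset ℕ} (hC : C ⊆ Icc 1 n) (hA : Disjoint A C)
    (hB : Disjoint B C) :
    (A ∪ C, B ∪ C) ∈ admissiblePairs n M ↔ (A, B) ∈ admissiblePairs n M := by
  have hcard {D : Finset ℕ} (hD : Disjoint D C) (m : ℕ) :
      #{s ∈ D ∪ C | s ≤ m} = #{s ∈ D | s ≤ m} + #{s ∈ C | s ≤ m} := by
    rw [filter_union, card_union_of_disjoint (disjoint_filter_filter hD)]
  simp only [mem_admissiblePairs, hcard hA, hcard hB, card_union_of_disjoint hA,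
    card_union_of_disjoint hB, union_subset_iff, hC, and_true, Nat.add_right_cancel_iff,
    Nat.add_le_add_iff_right]

theorem Spos_Tset_mem_admissiblePairs_iff (hn : n ∈ M) {p : Fin n → ℕ}
    (hp : StrictMonoOn p (Function.support p)) :
    (Spos p, Tset p) ∈ admissiblePairs n M ↔ ∀ m ∈ M, ∀ j : Fin n, (j : ℕ) < m → p j ≤ m := by
  simp only [mem_admissiblePairs, card_filter_Spos_le_card_filter_Tset_iff hp]
  refine ⟨fun h => h.2.2, fun h => ⟨⟨Spos_subset_Icc p, fun t ht => ?_⟩, ?_, h⟩⟩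
  · obtain ⟨j, hj, rfl⟩ := mem_Tset.1 ht
    exact mem_Icc.2 ⟨Nat.one_le_iff_ne_zero.2 hj, h n hn j j.2⟩
  · rw [card_Spos, card_Tset hp]

theorem bijOn_Spos_Tset (hn : n ∈ M) :
    Set.BijOn (fun p : Fin n → ℕ => (Spos p, Tset p))
      {p | StrictMonoOn p (Function.support p) ∧ ∀ m ∈ M, ∀ j : Fin n, (j : ℕ) < m → p j ≤ m}
      (admissiblePairs n M) := by
  refine ⟨fun p hp => (Spos_Tset_mem_admissiblePairs_iff hn hp.1).2 hp.2, ?_, ?_⟩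
  · intro p hp q hq hpq
    exact eq_of_Spos_eq_of_Tset_eq hp.1 hq.1 (congrArg Prod.fst hpq) (congrArg Prod.snd hpq)
  · rintro ⟨S, T⟩ hST
    obtain ⟨⟨hS, hT⟩, hcard, -⟩ := mem_admissiblePairs.1 hST
    have hT0 : 0 ∉ T := fun h0 => by simpa using hT h0
    obtain ⟨p, hp, rfl, rfl⟩ := exists_Spos_eq_Tset_eq hS hT0 hcard
    exact ⟨p, ⟨hp, (Spos_Tset_mem_admissiblePairs_iff hn hp).1 hST⟩, rfl⟩

theorem sum_range_card_admissiblePairs_mul_pow {R : Type*} [CommSemiring R] (x : R) :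
    ∑ i ∈ range (n + 1), (#{q ∈ admissiblePairs n M | #q.1 = i} : R) * x ^ i =
      ∑ i ∈ range (n / 2 + 1),
        (#{q ∈ {q ∈ admissiblePairs n M | q.1 ∩ q.2 = ∅} | #q.1 = i} : R) *
          (x ^ i * (1 + x) ^ (n - 2 * i)) := by
  have hU : ∀ q ∈ admissiblePairs n M, q.1 ⊆ Icc 1 n ∧ q.2 ⊆ Icc 1 n :=
    fun q hq => (mem_admissiblePairs.1 hq).1
  have hcard : ∀ q ∈ admissiblePairs n M, #q.1 = #q.2 := fun q hq => (mem_admissiblePairs.1 hq).2.1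
  have hle : ∀ q ∈ admissiblePairs n M, #q.1 < n + 1 := by
    intro q hq
    have := card_le_card (hU q hq).1
    rw [Nat.card_Icc] at this
    omega
  have hle_half : ∀ q ∈ {q ∈ admissiblePairs n M | q.1 ∩ q.2 = ∅}, #q.1 < n / 2 + 1 := by
    intro q hq
    obtain ⟨hq, hdisj⟩ := mem_filter.1 hq
    have := card_le_card (union_subset (hU q hq).1 (hU q hq).2)
    rw [card_union_of_disjoint (disjoint_iff_inter_eq_empty.2 hdisj), Nat.card_Icc] at this
    have := hcard q hq
    omega
  rw [sum_range_card_fiber_mul hle fun i => x ^ i,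
    sum_range_card_fiber_mul hle_half fun i => x ^ i * (1 + x) ^ (n - 2 * i),
    sum_pow_card_eq_sum_disjoint x hU hcard fun _ _ _ => union_mem_admissiblePairs_iff,
    Nat.card_Icc, Nat.add_sub_cancel]

end AdmissiblePairs

section Compositions

/-- The set `{s₁, …, s_k}` of partial sums of a composition. -/
def partialSums (σ : List ℕ) : Set ℕ := pSum σ '' Set.Icc 1 σ.length

variable {n : ℕ} {σ : List ℕ}

theorem sum_mem_partialSums (h : 0 < σ.sum) : σ.sum ∈ partialSums σ := by
  refine ⟨σ.length, ⟨List.length_pos_iff.2 ?_, le_rfl⟩, by rw [pSum, List.take_length]⟩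
  rintro rfl
  exact h.ne' rfl

theorem memP_iff {a : Fin n → ℕ} :
    memP n σ a ↔ ∀ m ∈ partialSums σ, ∑ j ∈ ({j | (j : ℕ) < m} : Finset (Fin n)), a j ≤ m := by
  simp only [memP, partialSums, Set.forall_mem_image, Set.mem_Icc, and_imp]

theorem memH_iff {p : Fin n → ℕ} :
    memH n σ p ↔ StrictMonoOn p (Function.support p) ∧
      ∀ m ∈ partialSums σ, ∀ j : Fin n, (j : ℕ) < m → p j ≤ m := by
  simp only [memH, partialSums, Set.forall_mem_image, Set.mem_Icc, and_imp]
  exact and_congr_left' ⟨fun h j hj k hk hjk => h j k hjk hj hk, fun h j k hjk hj hk => h hj hk hjk⟩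

theorem memH_cumulate_iff {a : Fin n → ℕ} : memH n σ (cumulate a) ↔ memP n σ a := by
  have hlower (m : ℕ) : IsLowerSet (({j | (j : ℕ) < m} : Finset (Fin n)) : Set (Fin n)) := by
    intro j k hkj hj
    simp only [coe_filter, mem_univ, true_and, Set.mem_ofPred_eq] at hj ⊢
    exact lt_of_le_of_lt hkj hj
  simp only [memH_iff, memP_iff, strictMonoOn_cumulate, true_and, ← sup_cumulate a (hlower _),
    Finset.sup_le_iff, mem_filter, mem_univ]

theorem hVec_eq_ncard_memH (n : ℕ) (σ : List ℕ) (i : ℕ) :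
    hVec n σ i = {p : Fin n → ℕ | memH n σ p ∧ #(Spos p) = i}.ncard := by
  have hcount (a : Fin n → ℕ) : #(Spos (cumulate a)) = nonzeroCount a := by
    simp only [card_Spos, nonzeroCount, ne_eq, cumulate_eq_zero_iff]
  rw [hVec, ← Set.ncard_image_of_injective _ cumulate_injective]
  congr 1
  ext p
  constructor
  · rintro ⟨a, ⟨ha, rfl⟩, rfl⟩
    exact ⟨memH_cumulate_iff.2 ha, hcount a⟩
  · rintro ⟨hp, rfl⟩
    obtain ⟨a, rfl⟩ : ∃ a, cumulate a = p := ⟨_, cumulate_increments (memH_iff.1 hp).1⟩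
    exact ⟨a, ⟨memH_cumulate_iff.1 hp, (hcount a).symm⟩, rfl⟩

theorem ncard_memH_eq_card_filter (hn : n ∈ partialSums σ) (Q : Finset ℕ × Finset ℕ → Prop)
    [DecidablePred Q] :
    {p : Fin n → ℕ | memH n σ p ∧ Q (Spos p, Tset p)}.ncard =
      #{q ∈ admissiblePairs n (partialSums σ) | Q q} := by
  have hbij := bijOn_Spos_Tset hn
  simp only [← memH_iff] at hbij
  rw [← Set.ncard_coe_finset, coe_filter, ← (hbij.injOn.mono fun p hp => hp.1).ncard_image]
  congr 1
  exact (Set.image_inter_preimage _ _ {q | Q q}).trans (congrArg (· ∩ {q | Q q}) hbij.image_eq)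

end Compositions

/-- The gamma-expansion of `h(σ,t)`, where `γ_i(σ)` counts the elements
`x ∈ H_σ` with `S(x) ∩ T(x) = ∅` and `#S(x) = i`. -/
theorem hPoly_gamma_expansion (n : ℕ) (hn : 0 < n) (σ : List ℕ)
    (hpos : ∀ r ∈ σ, 0 < r) (hsum : σ.sum = n) :
    (∑ i ∈ Finset.range (n + 1), Polynomial.C (hVec n σ i) * X ^ i : Polynomial ℕ) =
      ∑ i ∈ Finset.range (n / 2 + 1),
        Polynomial.C ({x : Fin n → ℕ |
            memH n σ x ∧ Spos x ∩ Tset x = ∅ ∧ (Spos x).card = i}.ncard) *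
          X ^ i * (1 + X) ^ (n - 2 * i) := by
  have hn_mem : n ∈ partialSums σ := hsum ▸ sum_mem_partialSums (hsum.symm ▸ hn)
  have hh (i : ℕ) : hVec n σ i = #{q ∈ admissiblePairs n (partialSums σ) | #q.1 = i} := by
    rw [hVec_eq_ncard_memH, ncard_memH_eq_card_filter hn_mem fun q => #q.1 = i]
  have hγ (i : ℕ) :
      {x : Fin n → ℕ | memH n σ x ∧ Spos x ∩ Tset x = ∅ ∧ #(Spos x) = i}.ncard =
        #{q ∈ {q ∈ admissiblePairs n (partialSums σ) | q.1 ∩ q.2 = ∅} | #q.1 = i} := by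
    rw [filter_filter, ncard_memH_eq_card_filter hn_mem fun q => q.1 ∩ q.2 = ∅ ∧ #q.1 = i]
  simpa only [hh, hγ, eq_natCast, mul_assoc] using
    sum_range_card_admissiblePairs_mul_pow (X : ℕ[X])
end

section
/- Let σ = (r_1,...,r_k) be a composition of a positive integer n with partial sums s_i, and for m ∈ ℕ let N(m) denote the number of points (a_1,...,a_n) ∈ ℕ^n with a_1 + ... + a_{s_i} ≤ m·s_i for all i ∈ {1,...,k}. Let W_σ be the set of words w = (w_1,...,w_n) with entries in {1,...,n} such that for every i ∈ {1,...,k}, at least s_i entries of w are ≤ s_i; for w ∈ W_σ let asc(w) be the number of indices i ∈ {1,...,n} with w_{i-1} < w_i, where w_0 := 1. Then, as an identity of formal power series in t, (1−t)^{n+1} · Σ_{m≥0} N(m) t^m = Σ_{w ∈ W_σ} t^{asc(w)} (i.e., the h*-polynomial of the composition polytope Q_σ equals Σ_{w ∈ W_σ} t^{asc(w)}). -/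
open Finset Polynomial

/-- The number of lattice points of the `m`-th dilate of the composition
polytope `Q_σ`, i.e. the Ehrhart polynomial of `Q_σ` evaluated at `m`. -/
noncomputable def ehrCount (n : ℕ) (σ : List ℕ) (m : ℕ) : ℕ :=
  {a : Fin n → ℕ | ∀ i, 1 ≤ i → i ≤ σ.length →
    (∑ j ∈ Finset.univ.filter (fun j : Fin n => (j : ℕ) < pSum σ i), a j)
      ≤ m * pSum σ i}.ncard

/-- The number of ascents of the word `w = (w₁, …, w_n)`, where `w₀ := 1`:
the number of indices `i ∈ [n]` with `w_{i-1} < w_i`. -/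
def ascCount {n : ℕ} (w : Fin n → ℕ) : ℕ :=
  (Finset.univ.filter (fun j : Fin n =>
    (if (j : ℕ) = 0 then 1
     else w ⟨(j : ℕ) - 1, Nat.lt_of_le_of_lt (Nat.sub_le _ _) j.isLt⟩) < w j)).card

/-!
Write the `j`-th partial sum of a lattice point of the `m`-th dilate as `m * (w j - 1) + f j` with
`1 ≤ f j ≤ m` (and `w j = 1`, `f j = 0` if it vanishes). This partial sum is at most `m * t` iff
`w j ≤ t`, so the inequalities of the dilate only constrain the multiset of the letters `w j`, and
the pairs `(f j, w j)` may be listed in any order. List them by increasing `f`, and by decreasing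
`w` among equal `f`: then `f` increases weakly from `0`, strictly at every ascent of `w`, so a word
`w` with `d` ascents admits `(n + m - d).choose n` sequences `f`. These numbers have generating
function `X ^ d / (1 - X) ^ (n + 1)`.
-/

section PartialSums

variable {n : ℕ}

lemma partialSum_eq_sum_filter {M : Type*} [AddCommMonoid M] (a : Fin n → M) (k : Fin (n + 1)) :
    Fin.partialSum a k = ∑ j with j.val < k.val, a j :=
  List.sum_take_ofFn a k

lemma partialSum_last {M : Type*} [AddCommMonoid M] (a : Fin n → M) :
    Fin.partialSum a (Fin.last n) = ∑ j, a j := by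
  simp [partialSum_eq_sum_filter]

lemma cons_zero_tail_partialSum {M : Type*} [AddMonoid M] (a : Fin n → M) :
    (Fin.cons 0 (Fin.tail (Fin.partialSum a)) : Fin (n + 1) → M) = Fin.partialSum a := by
  simpa using Fin.cons_self_tail (Fin.partialSum a)

lemma monotone_partialSum {M : Type*} [AddMonoid M] [Preorder M] [CanonicallyOrderedAdd M]
    (a : Fin n → M) : Monotone (Fin.partialSum a) :=
  Fin.monotone_iff_le_succ.2 fun j => by
    rw [Fin.partialSum_succ]
    exact le_self_add

lemma monotone_tail_partialSum {M : Type*} [AddMonoid M] [Preorder M] [CanonicallyOrderedAdd M]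
    (a : Fin n → M) : Monotone (Fin.tail (Fin.partialSum a)) :=
  (monotone_partialSum a).comp Fin.strictMono_succ.monotone

lemma partialSum_injective {M : Type*} [AddLeftCancelMonoid M] :
    Function.Injective (Fin.partialSum : (Fin n → M) → Fin (n + 1) → M) := by
  intro a b h
  funext j
  have hsucc := congrFun h j.succ
  rwa [Fin.partialSum_succ, Fin.partialSum_succ, congrFun h, add_left_cancel_iff] at hsucc

lemma tail_partialSum_injective {M : Type*} [AddLeftCancelMonoid M] :
    Function.Injective fun a : Fin n → M => Fin.tail (Fin.partialSum a) := by
  refine fun a b hab => partialSum_injective ?_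
  rw [← cons_zero_tail_partialSum a, ← cons_zero_tail_partialSum b]
  exact congrArg _ hab

lemma monotone_cons_iff {α : Type*} [Preorder α] {x : α} {b : Fin n → α} :
    Monotone (Fin.cons x b : Fin (n + 1) → α) ↔ (∀ j, x ≤ b j) ∧ Monotone b := by
  refine ⟨fun h => ⟨fun j => h (Fin.zero_le j.succ), h.comp Fin.strictMono_succ.monotone⟩, ?_⟩
  rintro ⟨hx, hb⟩ i j hij
  induction j using Fin.cases with
  | zero => rw [Fin.le_zero_iff.1 hij]
  | succ j =>
    induction i using Fin.cases with
    | zero => exact hx j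
    | succ i => exact hb (Fin.succ_le_succ_iff.1 hij)

lemma exists_tail_partialSum_eq {M : Type*} [AddCommMonoid M] [PartialOrder M]
    [CanonicallyOrderedAdd M] [Sub M] [OrderedSub M] {b : Fin n → M} (hb : Monotone b) :
    ∃ a, Fin.tail (Fin.partialSum a) = b := by
  set c : Fin (n + 1) → M := Fin.cons 0 b with hc
  have hmono := Fin.monotone_iff_le_succ.1 (monotone_cons_iff.2 ⟨fun _ => zero_le, hb⟩)
  have hsum : Fin.partialSum (fun j : Fin n => c j.succ - c j.castSucc) = c := by
    funext k
    induction k using Fin.induction with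
    | zero => simp [hc]
    | succ j ih => rw [Fin.partialSum_succ, ih, add_tsub_cancel_of_le (hmono j)]
  exact ⟨_, by rw [hsum, hc, Fin.tail_cons]⟩

lemma ncard_setOf_tail_partialSum (P : (Fin n → ℕ) → Prop) :
    {a | P (Fin.tail (Fin.partialSum a))}.ncard = {b | P b ∧ Monotone b}.ncard := by
  refine Set.BijOn.ncard_eq (f := fun a => Fin.tail (Fin.partialSum a))
    ⟨fun a ha => ⟨ha, monotone_tail_partialSum a⟩, tail_partialSum_injective.injOn, ?_⟩
  rintro b ⟨hP, hb⟩
  obtain ⟨a, rfl⟩ := exists_tail_partialSum_eq hb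
  exact ⟨a, hP, rfl⟩

lemma forall_le_of_le_card {α : Type*} [LE α] [DecidableLE α] {b : Fin n → α} {x : α}
    (h : n ≤ #{j | b j ≤ x}) (j : Fin n) : b j ≤ x := by
  have huniv := eq_univ_of_card _ ((card_le_univ _).antisymm ((Fintype.card_fin n).trans_le h))
  simpa using (huniv ▸ mem_univ j :)

lemma partialSum_le_iff_le_card {M : Type*} [AddMonoid M] [LinearOrder M]
    [CanonicallyOrderedAdd M] {a : Fin n → M} {k : Fin (n + 1)} {x : M} :
    Fin.partialSum a k ≤ x ↔ k.val ≤ #{j | Fin.tail (Fin.partialSum a) j ≤ x} := by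
  induction k using Fin.cases with
  | zero => simp
  | succ k => exact (Tuple.lt_card_le_iff_apply_le_of_monotone (monotone_tail_partialSum a)).symm

end PartialSums

section Counting

variable {n : ℕ}

lemma ncard_setOf_sum_le (n M : ℕ) : {e : Fin n → ℕ | ∑ j, e j ≤ M}.ncard = (n + M).choose n := by
  have hslack : Set.BijOn (fun P : Fin (n + 1) → ℕ => Fin.tail P) {P | ∑ j, P j = M}
      {e | ∑ j, e j ≤ M} := by
    refine Set.InvOn.bijOn (f' := fun e => Fin.cons (M - ∑ j, e j) e) ⟨?_, ?_⟩ ?_ ?_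
    · intro P hP
      rw [Set.mem_ofPred_eq, Fin.sum_univ_succ] at hP
      have h0 : M - ∑ j, Fin.tail P j = P 0 := by simp only [Fin.tail]; omega
      simp only [h0, Fin.cons_self_tail]
    · intro e _
      rfl
    · intro P hP
      rw [Set.mem_ofPred_eq, Fin.sum_univ_succ] at hP
      exact hP ▸ Nat.le_add_left _ _
    · intro e he
      simpa [Fin.sum_univ_succ] using Nat.sub_add_cancel he
  calc {e : Fin n → ℕ | ∑ j, e j ≤ M}.ncard
      = Nat.card {P : Fin (n + 1) → ℕ // ∑ j, P j = M} := hslack.ncard_eq.symm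
    _ = Nat.card (Sym (Fin (n + 1)) M) := (Nat.card_congr (Sym.equivNatSumOfFintype _ M)).symm
    _ = (n + M).choose n := by
      rw [Nat.card_eq_fintype_card, Sym.card_sym_eq_choose, Fintype.card_fin,
        Nat.add_right_comm, Nat.add_sub_cancel, Nat.choose_symm_add]

lemma ncard_setOf_le_and_sum_le (d : Fin n → ℕ) (m : ℕ) :
    {a | d ≤ a ∧ ∑ j, a j ≤ m}.ncard =
      if ∑ j, d j ≤ m then (n + (m - ∑ j, d j)).choose n else 0 := by
  split_ifs with hd
  · rw [← ncard_setOf_sum_le]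
    symm
    refine (Set.InvOn.bijOn (f := fun e => e + d) (f' := fun a => a - d) ⟨?_, ?_⟩ ?_ ?_).ncard_eq
    · exact fun e _ => add_tsub_cancel_right e d
    · exact fun a ha => tsub_add_cancel_of_le ha.1
    · intro e he
      refine ⟨le_add_self, ?_⟩
      simpa [sum_add_distrib] using Nat.add_le_of_le_sub hd he
    · rintro a ⟨hda, ha⟩
      have hsum : ∑ j, (a - d) j + ∑ j, d j = ∑ j, a j := by
        rw [← sum_add_distrib]
        exact sum_congr rfl fun j _ => Nat.sub_add_cancel (hda j)
      exact Nat.le_sub_of_add_le (hsum.trans_le ha)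
  · have hempty : {a : Fin n → ℕ | d ≤ a ∧ ∑ j, a j ≤ m} = ∅ :=
      Set.eq_empty_of_forall_notMem fun a ha => hd ((sum_le_sum fun j _ => ha.1 j).trans ha.2)
    rw [hempty, Set.ncard_empty]

lemma comp_perm_eq_of_monotone {α β : Type*} [PartialOrder β] {κ : α → β}
    (hκ : Function.Injective κ) {p : Fin n → α} {τ : Equiv.Perm (Fin n)}
    (hp : Monotone (κ ∘ p)) (hpτ : Monotone (κ ∘ p ∘ τ)) : p ∘ τ = p :=
  hκ.comp_left (Tuple.unique_monotone (f := κ ∘ p) (σ := τ) (τ := 1) hpτ hp)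

/-- Both sides count the orbits of the permutations of the entries on `S`. -/
lemma ncard_setOf_monotone_comp_eq {α β γ : Type*} [LinearOrder β] [LinearOrder γ]
    {κ : α → β} {μ : α → γ} (hκ : Function.Injective κ) (hμ : Function.Injective μ)
    {S : Set (Fin n → α)} (hS : ∀ p ∈ S, ∀ τ : Equiv.Perm (Fin n), p ∘ τ ∈ S) :
    {p | p ∈ S ∧ Monotone (κ ∘ p)}.ncard = {p | p ∈ S ∧ Monotone (μ ∘ p)}.ncard := by
  refine (Set.InvOn.bijOn (f := fun p => p ∘ Tuple.sort (μ ∘ p))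
    (f' := fun q => q ∘ Tuple.sort (κ ∘ q)) ⟨?_, ?_⟩ ?_ ?_).ncard_eq
  · rintro p ⟨-, hp⟩
    exact comp_perm_eq_of_monotone
      (τ := Tuple.sort (μ ∘ p) * Tuple.sort (κ ∘ p ∘ Tuple.sort (μ ∘ p))) hκ hp
      (Tuple.monotone_sort (κ ∘ p ∘ Tuple.sort (μ ∘ p)))
  · rintro q ⟨-, hq⟩
    exact comp_perm_eq_of_monotone
      (τ := Tuple.sort (κ ∘ q) * Tuple.sort (μ ∘ q ∘ Tuple.sort (κ ∘ q))) hμ hq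
      (Tuple.monotone_sort (μ ∘ q ∘ Tuple.sort (κ ∘ q)))
  · exact fun p hp => ⟨hS p hp.1 _, Tuple.monotone_sort (μ ∘ p)⟩
  · exact fun q hq => ⟨hS q hq.1 _, Tuple.monotone_sort (κ ∘ q)⟩

lemma ncard_eq_sum_ncard_fiber {α β : Type*} {S : Set α} {φ : α → β} {W : Finset β}
    (hφ : Set.MapsTo φ S W) (hfin : ∀ w ∈ W, {x | x ∈ S ∧ φ x = w}.Finite) :
    S.ncard = ∑ w ∈ W, {x | x ∈ S ∧ φ x = w}.ncard := by
  have hS : S = ⋃ w ∈ (W : Set β), {x | x ∈ S ∧ φ x = w} := by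
    ext x
    simpa using fun hx => hφ hx
  have hdisj : (W : Set β).PairwiseDisjoint fun w => {x | x ∈ S ∧ φ x = w} :=
    fun v _ w _ hvw => Set.disjoint_left.2 fun x hv hw => hvw (hv.2.symm.trans hw.2)
  conv_lhs => rw [hS, W.finite_toSet.ncard_biUnion hfin hdisj]
  exact finsum_mem_coe_finset _ W

lemma one_sub_X_pow_mul_mk_sum_choose {R ι : Type*} [CommRing R] (n : ℕ) (W : Finset ι)
    (d : ι → ℕ) :
    (1 - PowerSeries.X : PowerSeries R) ^ (n + 1) * PowerSeries.mk (fun m =>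
        ((∑ w ∈ W, if d w ≤ m then (n + (m - d w)).choose n else 0 : ℕ) : R)) =
      ∑ w ∈ W, PowerSeries.X ^ d w := by
  have hmk : PowerSeries.mk (fun m =>
      ((∑ w ∈ W, if d w ≤ m then (n + (m - d w)).choose n else 0 : ℕ) : R)) =
      (∑ w ∈ W, PowerSeries.X ^ d w) * PowerSeries.mk 1 ^ (n + 1) := by
    ext m
    simp [PowerSeries.mk_one_pow_eq_mk_choose_add, sum_mul, PowerSeries.coeff_X_pow_mul']
  rw [hmk, mul_comm, mul_assoc, ← mul_pow, PowerSeries.mk_one_mul_one_sub_eq_one, one_pow, mul_one]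

end Counting

section CompatibleSequences

variable {n : ℕ}

/-- `ascIndicator w j` is `1` if there is an ascent from `w_{j-1}` to `w_j`, where `w_0 = 1`
precedes the first letter, and `0` otherwise. -/
def ascIndicator (w : Fin n → ℕ) (j : Fin n) : ℕ :=
  if (Fin.cons 1 w : Fin (n + 1) → ℕ) j.castSucc < w j then 1 else 0

lemma sum_ascIndicator (w : Fin n → ℕ) : ∑ j, ascIndicator w j = ascCount w := by
  have hprev (j : Fin n) : (Fin.cons 1 w : Fin (n + 1) → ℕ) j.castSucc =
      if (j : ℕ) = 0 then 1 else w ⟨(j : ℕ) - 1, (Nat.sub_le _ _).trans_lt j.isLt⟩ := by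
    cases n with
    | zero => exact j.elim0
    | succ n => cases j using Fin.cases <;> rfl
  simp only [ascIndicator, ascCount, card_filter, hprev]

/-- The sequence `f` is compatible with the word `w` if `0 ≤ f_1 ≤ ⋯ ≤ f_n`, with strict inequality
at each ascent of `w` (including an initial ascent from `w_0 = 1`). In other words, the pairs
`(f_j, w_j)`, preceded by `(0, 1)`, increase in the lexicographic order that reverses the order of
the letters. -/
def IsCompatible (w f : Fin n → ℕ) : Prop :=
  Monotone fun j : Fin (n + 1) => (toLex ((Fin.cons 0 f : Fin (n + 1) → ℕ) j,
    OrderDual.toDual ((Fin.cons 1 w : Fin (n + 1) → ℕ) j)) : ℕ ×ₗ ℕᵒᵈ)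

lemma IsCompatible.monotone {w f : Fin n → ℕ} (h : IsCompatible w f) : Monotone f :=
  fun _ _ hij => (Prod.Lex.monotone_fst _ _ (h (Fin.succ_le_succ_iff.2 hij)) :)

lemma IsCompatible.le_one_of_eq_zero {w f : Fin n → ℕ} (h : IsCompatible w f) {j : Fin n}
    (hj : f j = 0) : w j ≤ 1 := by
  simpa [Prod.Lex.toLex_le_toLex, hj, OrderDual.le_toDual] using h (Fin.zero_le j.succ)

lemma isCompatible_tail_partialSum {w a : Fin n → ℕ} :
    IsCompatible w (Fin.tail (Fin.partialSum a)) ↔ ascIndicator w ≤ a := by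
  rw [IsCompatible, cons_zero_tail_partialSum, Fin.monotone_iff_le_succ]
  refine forall_congr' fun j => ?_
  simp only [Prod.Lex.toLex_le_toLex, Fin.partialSum_succ, OrderDual.toDual_le_toDual,
    Fin.cons_succ, ascIndicator]
  split_ifs <;> omega

lemma tail_partialSum_le_iff {a : Fin n → ℕ} {m : ℕ} :
    (∀ j, Fin.tail (Fin.partialSum a) j ≤ m) ↔ ∑ j, a j ≤ m := by
  rw [← partialSum_last, partialSum_le_iff_le_card, Fin.val_last]
  exact ⟨fun h => by simp [h], forall_le_of_le_card⟩

lemma ncard_setOf_isCompatible_le (w : Fin n → ℕ) (m : ℕ) :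
    {f | IsCompatible w f ∧ ∀ j, f j ≤ m}.ncard =
      if ascCount w ≤ m then (n + (m - ascCount w)).choose n else 0 := by
  calc {f | IsCompatible w f ∧ ∀ j, f j ≤ m}.ncard
      = {f | (IsCompatible w f ∧ ∀ j, f j ≤ m) ∧ Monotone f}.ncard := by
        congr 1
        ext f
        exact ⟨fun h => ⟨h, h.1.monotone⟩, fun h => h.1⟩
    _ = {a | ascIndicator w ≤ a ∧ ∑ j, a j ≤ m}.ncard := by
        rw [← ncard_setOf_tail_partialSum fun f => IsCompatible w f ∧ ∀ j, f j ≤ m]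
        simp only [isCompatible_tail_partialSum, tail_partialSum_le_iff]
    _ = _ := by rw [ncard_setOf_le_and_sum_le, sum_ascIndicator]

end CompatibleSequences

section Levels

variable {n m : ℕ}

/-- The letter of a partial sum `b`: the least `w ≥ 1` with `b ≤ m * w` when `m` is positive.
The truncated subtraction makes it `1` at `b = 0`; for `m = 0` it is always `1`. -/
def level (m b : ℕ) : ℕ := (b - 1) / m + 1

/-- The remainder of `b` after its level has been removed, so that
`b = m * (level m b - 1) + residue m b`. It lies in `{1, …, m}` if `b` and `m` are positive. -/
def residue (m b : ℕ) : ℕ := b - m * ((b - 1) / m)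

lemma one_le_level (m b : ℕ) : 1 ≤ level m b := Nat.le_add_left 1 _

lemma level_zero_right (m : ℕ) : level m 0 = 1 := by simp [level]

lemma residue_zero_right (m : ℕ) : residue m 0 = 0 := by simp [residue]

lemma residue_add_mul_level (m b : ℕ) : residue m b + m * (level m b - 1) = b :=
  Nat.sub_add_cancel ((Nat.mul_div_le (b - 1) m).trans (Nat.sub_le b 1))

lemma residue_le (hm : 0 < m) (b : ℕ) : residue m b ≤ m := by
  have := Nat.div_add_mod (b - 1) m
  have := Nat.mod_lt (b - 1) hm
  unfold residue
  omega

lemma residue_le_and_level_le_iff {b s : ℕ} (hs : 0 < s) :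
    residue m b ≤ m ∧ level m b ≤ s ↔ b ≤ m * s := by
  obtain rfl | hm := m.eq_zero_or_pos
  · simpa [residue, level] using fun _ => Nat.succ_le_of_lt hs
  · have hms := Nat.mul_pos hm hs
    rw [and_iff_right (residue_le hm b), level, Nat.succ_le_iff, Nat.div_lt_iff_lt_mul hm,
      mul_comm s]
    omega

lemma level_add_mul {f w : ℕ} (hw : 1 ≤ w) (hf : f ≤ m) (hfw : f = 0 → w ≤ 1) :
    level m (f + m * (w - 1)) = w := by
  obtain rfl | hf₀ := f.eq_zero_or_pos
  · obtain rfl := (hfw rfl).antisymm hw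
    simp [level]
  · rw [level, Nat.sub_add_comm hf₀, Nat.add_mul_div_left _ _ (hf₀.trans_le hf),
      Nat.div_eq_of_lt (by omega), zero_add, Nat.sub_add_cancel hw]

lemma residue_add_mul {f w : ℕ} (hw : 1 ≤ w) (hf : f ≤ m) (hfw : f = 0 → w ≤ 1) :
    residue m (f + m * (w - 1)) = f := by
  have h := residue_add_mul_level m (f + m * (w - 1))
  rwa [level_add_mul hw hf hfw, Nat.add_right_cancel_iff] at h

lemma eq_zero_of_residue_eq_zero {b : ℕ} (h : residue m b = 0) : b = 0 := by
  have := Nat.mul_div_le (b - 1) m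
  unfold residue at h
  omega

/-- Sorting by `lexKey m` means sorting by increasing residues, and by decreasing levels among
equal residues. -/
def lexKey (m b : ℕ) : ℕ ×ₗ ℕᵒᵈ := toLex (residue m b, OrderDual.toDual (level m b))

lemma lexKey_injective (m : ℕ) : Function.Injective (lexKey m) := by
  intro b c h
  obtain ⟨hres, hlev⟩ := Prod.mk.inj (toLex.injective h)
  rw [← residue_add_mul_level m b, ← residue_add_mul_level m c, hres, OrderDual.toDual_inj.1 hlev]

lemma lexKey_zero_le (m b : ℕ) : lexKey m 0 ≤ lexKey m b := by
  obtain hb | hb := (residue m b).eq_zero_or_pos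
  · rw [eq_zero_of_residue_eq_zero hb]
  · exact Prod.Lex.toLex_le_toLex.2 (Or.inl (by rwa [residue_zero_right]))

lemma monotone_lexKey_comp_iff {b : Fin n → ℕ} :
    Monotone (lexKey m ∘ b) ↔ IsCompatible (level m ∘ b) (residue m ∘ b) := by
  have hcons : (Fin.cons (lexKey m 0) (lexKey m ∘ b) : Fin (n + 1) → ℕ ×ₗ ℕᵒᵈ) = fun j =>
      toLex ((Fin.cons 0 (residue m ∘ b) : Fin (n + 1) → ℕ) j,
        OrderDual.toDual ((Fin.cons 1 (level m ∘ b) : Fin (n + 1) → ℕ) j)) := by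
    funext j
    cases j using Fin.cases
    · simp [lexKey, residue_zero_right, level_zero_right]
    · rfl
  rw [IsCompatible, ← hcons, monotone_cons_iff]
  exact (and_iff_right fun j => lexKey_zero_le m (b j)).symm

lemma ncard_setOf_level_comp_eq {w : Fin n → ℕ} (hw : ∀ j, 1 ≤ w j) :
    {b | Monotone (lexKey m ∘ b) ∧ (∀ j, residue m (b j) ≤ m) ∧ level m ∘ b = w}.ncard =
      {f | IsCompatible w f ∧ ∀ j, f j ≤ m}.ncard := by
  have hlevel {f : Fin n → ℕ} (hf : IsCompatible w f) (hfm : ∀ j, f j ≤ m) (j : Fin n) :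
      level m (f j + m * (w j - 1)) = w j :=
    level_add_mul (hw j) (hfm j) hf.le_one_of_eq_zero
  have hresidue {f : Fin n → ℕ} (hf : IsCompatible w f) (hfm : ∀ j, f j ≤ m) (j : Fin n) :
      residue m (f j + m * (w j - 1)) = f j :=
    residue_add_mul (hw j) (hfm j) hf.le_one_of_eq_zero
  refine (Set.InvOn.bijOn (f := fun b => residue m ∘ b) (f' := fun f j => f j + m * (w j - 1))
    ⟨?_, ?_⟩ ?_ ?_).ncard_eq
  · rintro b ⟨-, -, rfl⟩
    exact funext fun j => residue_add_mul_level m (b j)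
  · exact fun f hf => funext fun j => hresidue hf.1 hf.2 j
  · rintro b ⟨hmono, hbm, rfl⟩
    exact ⟨monotone_lexKey_comp_iff.1 hmono, hbm⟩
  · rintro f ⟨hf, hfm⟩
    have hw_eq : (level m ∘ fun j => f j + m * (w j - 1)) = w := funext (hlevel hf hfm)
    have hf_eq : (residue m ∘ fun j => f j + m * (w j - 1)) = f := funext (hresidue hf hfm)
    refine ⟨?_, fun j => (congrFun hf_eq j).trans_le (hfm j), hw_eq⟩
    rwa [monotone_lexKey_comp_iff, hw_eq, hf_eq]

lemma finite_setOf_level_comp_eq (m : ℕ) (w : Fin n → ℕ) :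
    {b | (∀ j, residue m (b j) ≤ m) ∧ level m ∘ b = w}.Finite := by
  refine (Set.finite_Iic fun j => m * w j).subset ?_
  rintro b ⟨hbm, rfl⟩ j
  exact (residue_le_and_level_le_iff (one_le_level m (b j))).1 ⟨hbm j, le_rfl⟩

theorem ncard_setOf_monotone_level_comp_mem {W : Finset (Fin n → ℕ)}
    (hpos : ∀ w ∈ W, ∀ j, 1 ≤ w j) (hperm : ∀ w ∈ W, ∀ τ : Equiv.Perm (Fin n), w ∘ τ ∈ W) :
    {b | ((∀ j, residue m (b j) ≤ m) ∧ level m ∘ b ∈ W) ∧ Monotone b}.ncard =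
      ∑ w ∈ W, if ascCount w ≤ m then (n + (m - ascCount w)).choose n else 0 := by
  set S : Set (Fin n → ℕ) := {b | (∀ j, residue m (b j) ≤ m) ∧ level m ∘ b ∈ W}
  have hS : ∀ b ∈ S, ∀ τ : Equiv.Perm (Fin n), b ∘ τ ∈ S :=
    fun b hb τ => ⟨fun j => hb.1 (τ j), hperm _ hb.2 τ⟩
  have hfiber {w : Fin n → ℕ} (hw : w ∈ W) :
      {b | (b ∈ S ∧ Monotone (lexKey m ∘ b)) ∧ level m ∘ b = w} =
        {b | Monotone (lexKey m ∘ b) ∧ (∀ j, residue m (b j) ≤ m) ∧ level m ∘ b = w} := by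
    ext b
    refine ⟨fun h => ⟨h.1.2, h.1.1.1, h.2⟩, fun h => ⟨⟨⟨h.2.1, ?_⟩, h.1⟩, h.2.2⟩⟩
    exact h.2.2 ▸ hw
  calc {b | b ∈ S ∧ Monotone b}.ncard
      = {b | b ∈ S ∧ Monotone (lexKey m ∘ b)}.ncard :=
        ncard_setOf_monotone_comp_eq Function.injective_id (lexKey_injective m) hS
    _ = ∑ w ∈ W, {b | (b ∈ S ∧ Monotone (lexKey m ∘ b)) ∧ level m ∘ b = w}.ncard :=
        ncard_eq_sum_ncard_fiber (fun b hb => hb.1.2) fun w _ =>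
          (finite_setOf_level_comp_eq m w).subset fun b hb => ⟨hb.1.1.1, hb.2⟩
    _ = _ := sum_congr rfl fun w hw => by
        rw [hfiber hw, ncard_setOf_level_comp_eq (hpos w hw), ncard_setOf_isCompatible_le]

end Levels

section Thresholds

/-- The words of length `n` over the alphabet `{1, …, N}` that have at least `s i` letters `≤ t i`
for every `i ∈ I`. For `s = t` running through the partial sums of a composition of `n`, and
`N = n`, this is the paper's `W_σ`. -/
def thresholdWords {ι : Type*} (n N : ℕ) (I : Finset ι) (s t : ι → ℕ) : Finset (Fin n → ℕ) :=
  {w ∈ Fintype.piFinset fun _ : Fin n => Icc 1 N | ∀ i ∈ I, s i ≤ #{j | w j ≤ t i}}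

variable {ι : Type*} {n N : ℕ} {I : Finset ι} {s t : ι → ℕ}

lemma mem_thresholdWords {w : Fin n → ℕ} : w ∈ thresholdWords n N I s t ↔
    (∀ j, 1 ≤ w j ∧ w j ≤ N) ∧ ∀ i ∈ I, s i ≤ #{j | w j ≤ t i} := by
  simp [thresholdWords]

lemma comp_perm_mem_thresholdWords {w : Fin n → ℕ} (hw : w ∈ thresholdWords n N I s t)
    (τ : Equiv.Perm (Fin n)) : w ∘ τ ∈ thresholdWords n N I s t := by
  rw [mem_thresholdWords] at hw ⊢
  refine ⟨fun j => hw.1 (τ j), fun i hi => (hw.2 i hi).trans_eq ?_⟩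
  exact (card_equiv τ (by simp)).symm

lemma forall_sum_filter_le_iff (hs : ∀ i ∈ I, s i ≤ n) {a : Fin n → ℕ} {M : ι → ℕ} :
    (∀ i ∈ I, ∑ j with j.val < s i, a j ≤ M i) ↔
      ∀ i ∈ I, s i ≤ #{j | Fin.tail (Fin.partialSum a) j ≤ M i} := by
  refine forall₂_congr fun i hi => ?_
  have hsum := partialSum_eq_sum_filter a ⟨s i, Nat.lt_succ_of_le (hs i hi)⟩
  rw [← hsum, partialSum_le_iff_le_card]

lemma forall_le_card_mul_iff (ht : ∀ i ∈ I, 0 < t i) (hN : ∃ i ∈ I, s i = n ∧ t i ≤ N) {m : ℕ}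
    {b : Fin n → ℕ} : (∀ i ∈ I, s i ≤ #{j | b j ≤ m * t i}) ↔
      (∀ j, residue m (b j) ≤ m) ∧ level m ∘ b ∈ thresholdWords n N I s t := by
  have hcount (hbm : ∀ j, residue m (b j) ≤ m) {i : ι} (hi : i ∈ I) :
      #{j | b j ≤ m * t i} = #{j | level m (b j) ≤ t i} := by
    simp only [← residue_le_and_level_le_iff (ht i hi), hbm, true_and]
  obtain ⟨i, hi, hsi, hti⟩ := hN
  rw [mem_thresholdWords]
  constructor
  · intro h
    have hb (j : Fin n) := (residue_le_and_level_le_iff (ht i hi)).2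
      (forall_le_of_le_card (hsi ▸ h i hi) j)
    have hbm (j : Fin n) := (hb j).1
    exact ⟨hbm, fun j => ⟨one_le_level m _, (hb j).2.trans hti⟩,
      fun k hk => (h k hk).trans_eq (hcount hbm hk)⟩
  · exact fun ⟨hbm, _, h⟩ k hk => (h k hk).trans_eq (hcount hbm hk).symm

/-- The polytopes `x_1 + ⋯ + x_{s i} ≤ t i` in the nonnegative orthant include both the composition
polytopes (`s = t`) and the Pitman–Stanley polytopes (`s i = i`). -/
theorem hStar_eq_ascent_polynomial_general {R : Type*} [CommRing R]
    (hs : ∀ i ∈ I, s i ≤ n) (ht : ∀ i ∈ I, 0 < t i) (hN : ∃ i ∈ I, s i = n ∧ t i ≤ N) :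
    (1 - PowerSeries.X : PowerSeries R) ^ (n + 1) * PowerSeries.mk (fun m =>
        ({a : Fin n → ℕ | ∀ i ∈ I, ∑ j with j.val < s i, a j ≤ m * t i}.ncard : R)) =
      ∑ w ∈ thresholdWords n N I s t, PowerSeries.X ^ ascCount w := by
  rw [← one_sub_X_pow_mul_mk_sum_choose]
  congr! with m
  simp only [forall_sum_filter_le_iff hs, forall_le_card_mul_iff ht hN]
  rw [ncard_setOf_tail_partialSum fun b =>
      (∀ j, residue m (b j) ≤ m) ∧ level m ∘ b ∈ thresholdWords n N I s t]
  exact ncard_setOf_monotone_level_comp_mem (fun w hw j => ((mem_thresholdWords.1 hw).1 j).1)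
    fun _ hw => comp_perm_mem_thresholdWords hw

end Thresholds

section Compositions

variable {σ : List ℕ} {i : ℕ}

lemma pSum_le_sum (σ : List ℕ) (i : ℕ) : pSum σ i ≤ σ.sum :=
  (List.take_sublist i σ).sum_le_sum fun _ _ => Nat.zero_le _

lemma pSum_length (σ : List ℕ) : pSum σ σ.length = σ.sum := by
  rw [pSum, List.take_length]

lemma pSum_pos (hpos : ∀ r ∈ σ, 0 < r) (hi : i ∈ Icc 1 σ.length) : 0 < pSum σ i := by
  rw [mem_Icc] at hi
  refine List.sum_pos _ (fun r hr => hpos r (List.mem_of_mem_take hr)) ?_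
  rw [← List.length_pos_iff, List.length_take]
  omega

lemma ehrCount_eq_ncard (n : ℕ) (σ : List ℕ) (m : ℕ) : ehrCount n σ m =
    {a : Fin n → ℕ |
      ∀ i ∈ Icc 1 σ.length, ∑ j with j.val < pSum σ i, a j ≤ m * pSum σ i}.ncard := by
  simp only [ehrCount, mem_Icc, and_imp]

end Compositions

open scoped Classical in
/-- The `h^*`-polynomial of the composition polytope `Q_σ` is the ascent
generating polynomial over all words `w ∈ [n]ⁿ` having at least `s_i` entries
`≤ s_i` for every `i ∈ [k]`. -/
theorem hStar_eq_ascent_polynomial (n : ℕ) (hn : 0 < n) (σ : List ℕ)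
    (hpos : ∀ r ∈ σ, 0 < r) (hsum : σ.sum = n) :
    (1 - PowerSeries.X : PowerSeries ℤ) ^ (n + 1) *
        PowerSeries.mk (fun m => (ehrCount n σ m : ℤ)) =
      ∑ w ∈ (Fintype.piFinset fun _ : Fin n => Finset.Icc 1 n).filter
          (fun w : Fin n → ℕ => ∀ i ∈ Finset.Icc 1 σ.length,
            pSum σ i ≤ (Finset.univ.filter (fun j : Fin n => w j ≤ pSum σ i)).card),
        (PowerSeries.X : PowerSeries ℤ) ^ ascCount w := by
  have hN : ∃ i ∈ Icc 1 σ.length, pSum σ i = n ∧ pSum σ i ≤ n := by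
    have hlen : 1 ≤ σ.length := List.length_pos_of_sum_pos σ (hsum ▸ hn)
    exact ⟨σ.length, mem_Icc.2 ⟨hlen, le_rfl⟩, by simp [pSum_length, hsum]⟩
  simp only [ehrCount_eq_ncard]
  convert hStar_eq_ascent_polynomial_general (R := ℤ) (fun i _ => hsum ▸ pSum_le_sum σ i)
    (fun _ hi => pSum_pos hpos hi) hN
  ext w
  simp [mem_thresholdWords]
end
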